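/- Let X = ℓ∞³, Y = ℓ₁³, and let T : X → Y be a bounded linear operator with ‖T‖ = 1 such that M_T ∩ Ext(B_X) = {±x₁, ±x₂, ±x₃, ±x₄}. If |S₁| = 2, |S₂| = 4 and |S₃| = 2, then T is 7-smooth, i.e., dim span J(T) = 7. -/

import Mathlib

open Metric Set Module Pointwise

noncomputable section

/-- `J x` is the set of supporting functionals of `x`. -/
def suppFunctionals {E : Type*} [NormedAddCommGroup E] [NormedSpace ℝ E] (x : E) :
    Set (E →L[ℝ] ℝ) := {f | ‖f‖ = 1 ∧ f x = 1}

/-- ℓ∞³ : ℝ³ with the max norm. -/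
abbrev Linf3 := Fin 3 → ℝ

/-- ℓ₁³ : ℝ³ with the ℓ¹ norm. -/
abbrev L13 := PiLp 1 (fun _ : Fin 3 => ℝ)

def x₁ : Linf3 := ![1, 1, 1]
def x₂ : Linf3 := ![-1, 1, 1]
def x₃ : Linf3 := ![-1, -1, 1]
def x₄ : Linf3 := ![1, -1, 1]

/-- `M_T ∩ Ext(B_X)`: the norm-attainment set of `T` intersected with the
extreme points of the closed unit ball. -/
def MTExt (T : Linf3 →L[ℝ] L13) : Set Linf3 :=
  {x ∈ sphere (0 : Linf3) 1 | ‖T x‖ = ‖T‖} ∩ extremePoints ℝ (closedBall (0 : Linf3) 1)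

/-- `Sk T k` is the set `S_k` of points `x` of `M_T ∩ Ext(B_X)` such that `T x` is
`k`-smooth. -/
def Sk (T : Linf3 →L[ℝ] L13) (k : ℕ) : Set Linf3 :=
  {x ∈ MTExt T | finrank ℝ (Submodule.span ℝ (suppFunctionals (T x))) = k}

/-- `±A`, i.e. `A ∪ (-A)`. -/
def pm {E : Type*} [NormedAddCommGroup E] [NormedSpace ℝ E] (A : Set (E →L[ℝ] ℝ)) :
    Set (E →L[ℝ] ℝ) := A ∪ (-A)

/-!
For vertices `xᵢ` of the cube forming a regular tetrahedron, the `±xᵢ` are all the vertices, so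
evaluation at the `xᵢ` embeds `L(ℓ∞³, ℓ₁³)` isometrically into an `ℓ∞`-sum of four copies of `ℓ₁³`.
By Hahn–Banach, `span J(T)` is therefore the sum of the spaces `xᵢ ⊗ span J(T xᵢ)`. The only linear
relation between the `xᵢ` is that their sum vanishes, whence
`dim span J(T) = ∑ dim span J(T xᵢ) - dim ⋂ span J(T xᵢ)`.

A unit vector of `ℓ₁³` is `k`-smooth when exactly `k - 1` of its coordinates vanish, and here the
four smoothness orders are `1, 2, 2, 3`. The vectors `T xᵢ` sum to zero, and comparing coordinates
shows that the smooth one is norm-parallel to each of the other three. Its supporting functional, up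
to sign, then supports all of them, so the intersection is a line and the dimension is `8 - 1 = 7`.
-/

/-- The linear span of the supporting functionals of `x`: the point `x` is `k`-smooth precisely when
this subspace has dimension `k`. -/
abbrev suppSpan {E : Type*} [NormedAddCommGroup E] [NormedSpace ℝ E] (x : E) :
    Submodule ℝ (E →L[ℝ] ℝ) := Submodule.span ℝ (suppFunctionals x)

section SupportingFunctionals

variable {E : Type*} [NormedAddCommGroup E] [NormedSpace ℝ E] {f : E →L[ℝ] ℝ} {x y : E}

lemma mem_suppFunctionals_of_norm_le_one (hx : ‖x‖ ≤ 1) (hf : ‖f‖ ≤ 1) (hfx : f x = 1) :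
    f ∈ suppFunctionals x := by
  refine ⟨hf.antisymm ?_, hfx⟩
  calc (1 : ℝ) = ‖f x‖ := by simp [hfx]
    _ ≤ ‖f‖ := f.unit_le_opNorm x hx

lemma apply_le_one_of_mem_suppFunctionals (hf : f ∈ suppFunctionals x) (hy : ‖y‖ ≤ 1) :
    f y ≤ 1 :=
  (le_abs_self _).trans (hf.1 ▸ f.unit_le_opNorm y hy)

lemma mem_suppSpan_of_apply_eq_norm (hfx : f x = ‖f‖) : f ∈ suppSpan x := by
  rcases eq_or_ne f 0 with rfl | hf
  · exact zero_mem _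
  have hf' : ‖f‖ ≠ 0 := norm_ne_zero_iff.2 hf
  rw [← smul_inv_smul₀ hf' f]
  exact Submodule.smul_mem _ _ <| Submodule.subset_span
    ⟨by simp [norm_smul, hf'], by simp [hfx, hf']⟩

lemma suppFunctionals_neg (x : E) : suppFunctionals (-x) = -suppFunctionals x := by
  ext f
  simp [suppFunctionals]

lemma suppSpan_neg (x : E) : suppSpan (-x) = suppSpan x := by
  rw [suppSpan, suppFunctionals_neg, Submodule.span_neg]

lemma suppFunctionals_inter_nonempty_of_norm_add (hx : ‖x‖ = 1) (hy : ‖y‖ = 1)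
    (h : ‖x + y‖ = ‖x‖ + ‖y‖) : (suppFunctionals x ∩ suppFunctionals y).Nonempty := by
  obtain ⟨f, hf, hfxy⟩ := exists_dual_vector ℝ (x + y) (by rw [h, hx, hy]; norm_num)
  have hfx : f x ≤ 1 := (le_abs_self _).trans (hf ▸ f.unit_le_opNorm x hx.le)
  have hfy : f y ≤ 1 := (le_abs_self _).trans (hf ▸ f.unit_le_opNorm y hy.le)
  have hsum : f x + f y = 2 := by
    rw [← map_add, hfxy, RCLike.ofReal_real_eq_id, id, h, hx, hy]; norm_num
  exact ⟨f, ⟨hf, by linarith⟩, hf, by linarith⟩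

/-- Norm-parallelism of `x` and `y` in a real normed space: `‖x + λ y‖ = ‖x‖ + ‖y‖` for some scalar
`λ` of modulus `1`, i.e. for `λ = 1` or `λ = -1`. For unit vectors it means that `x` and `y` have a
common supporting functional up to sign. -/
def NormParallel (x y : E) : Prop := ‖x + y‖ = ‖x‖ + ‖y‖ ∨ ‖x - y‖ = ‖x‖ + ‖y‖

lemma suppSpan_le_of_norm_add (hx : ‖x‖ = 1) (hy : ‖y‖ = 1) (hsmooth : finrank ℝ (suppSpan x) = 1)
    (h : ‖x + y‖ = ‖x‖ + ‖y‖) : suppSpan x ≤ suppSpan y := by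
  obtain ⟨f, hfx, hfy⟩ := suppFunctionals_inter_nonempty_of_norm_add hx hy h
  have hf : f ≠ 0 := norm_ne_zero_iff.1 (by rw [hfx.1]; exact one_ne_zero)
  have : FiniteDimensional ℝ (suppSpan x) := .of_finrank_pos (by omega)
  have hspan : ℝ ∙ f = suppSpan x := Submodule.eq_of_le_of_finrank_eq
    ((Submodule.span_singleton_le_iff_mem _ _).2 (Submodule.subset_span hfx))
    (by rw [finrank_span_singleton hf, hsmooth])
  rw [← hspan, Submodule.span_singleton_le_iff_mem]
  exact Submodule.subset_span hfy

lemma NormParallel.suppSpan_le (h : NormParallel x y) (hx : ‖x‖ = 1) (hy : ‖y‖ = 1)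
    (hsmooth : finrank ℝ (suppSpan x) = 1) : suppSpan x ≤ suppSpan y := by
  rcases h with h | h
  · exact suppSpan_le_of_norm_add hx hy hsmooth h
  · rw [← suppSpan_neg y]
    refine suppSpan_le_of_norm_add hx (by rwa [norm_neg]) hsmooth ?_
    rwa [← sub_eq_add_neg, norm_neg]

end SupportingFunctionals

section Operators

lemma exists_comp_linearIsometry_norm_eq {E F : Type*} [NormedAddCommGroup E] [NormedSpace ℝ E]
    [NormedAddCommGroup F] [NormedSpace ℝ F] (e : E →ₗᵢ[ℝ] F) (f : E →L[ℝ] ℝ) :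
    ∃ g : F →L[ℝ] ℝ, g.comp e.toContinuousLinearMap = f ∧ ‖g‖ = ‖f‖ := by
  obtain ⟨g, hg, hnorm⟩ := exists_extension_norm_eq (LinearMap.range e.toLinearMap)
    (f.comp e.equivRange.symm.toContinuousLinearEquiv.toContinuousLinearMap)
  refine ⟨g, ?_, ?_⟩
  · ext x
    have := hg (e.equivRange x)
    simpa using this
  · rw [hnorm]
    exact f.opNorm_comp_linearIsometryEquiv _

variable {X Y ι : Type*} [NormedAddCommGroup X] [NormedSpace ℝ X] [NormedAddCommGroup Y]
  [NormedSpace ℝ Y] [Fintype ι]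

lemma opNorm_le_of_closedBall_subset_absConvexHull {s : Set X}
    (hs : closedBall 0 1 ⊆ absConvexHull ℝ s) {S : X →L[ℝ] Y} {C : ℝ} (hC : 0 ≤ C)
    (hS : ∀ x ∈ s, ‖S x‖ ≤ C) : ‖S‖ ≤ C := by
  have hball : AbsConvex ℝ (S ⁻¹' closedBall 0 C) :=
    ⟨balanced_closedBall_zero.mulActionHom_preimage (f := (S : X →ₑ[RingHom.id ℝ] Y)),
      (convex_closedBall 0 C).linear_preimage S.toLinearMap⟩
  refine S.opNorm_le_of_unit_norm hC fun x hx => ?_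
  simpa using absConvexHull_min (fun y hy => by simpa using hS y hy) hball
    (hs (mem_closedBall_zero_iff.2 hx.le))

/-- Evaluation of operators at the points `x i`, as an isometry into the `ℓ∞`-sum of copies of `Y`;
it is isometric because the `x i` generate the unit ball of `X`. -/
def evalIsometry (Y : Type*) [NormedAddCommGroup Y] [NormedSpace ℝ Y] {x : ι → X}
    (hx : absConvexHull ℝ (range x) = closedBall 0 1) : (X →L[ℝ] Y) →ₗᵢ[ℝ] (ι → Y) where
  toFun S i := S (x i)
  map_add' _ _ := rfl
  map_smul' _ _ := rfl
  norm_map' S := by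
    refine le_antisymm ((pi_norm_le_iff_of_nonneg (norm_nonneg S)).2 fun i => ?_) ?_
    · refine S.unit_le_opNorm _ (mem_closedBall_zero_iff.1 ?_)
      exact hx ▸ subset_absConvexHull (mem_range_self i)
    · refine opNorm_le_of_closedBall_subset_absConvexHull hx.ge (norm_nonneg _) ?_
      rintro _ ⟨i, rfl⟩
      exact norm_le_pi_norm (fun j => S (x j)) i

lemma comp_single_apply_eq_norm [DecidableEq ι] {v : ι → Y} {G : (ι → Y) →L[ℝ] ℝ} (hv : ‖v‖ ≤ 1)
    (hG : G ∈ suppFunctionals v) (i : ι) :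
    (G.comp (.single ℝ (fun _ => Y) i)) (v i) = ‖G.comp (.single ℝ (fun _ => Y) i)‖ := by
  set g := G.comp (.single ℝ (fun _ => Y) i)
  have hmax : ∀ y, ‖y‖ ≤ 1 → g y ≤ g (v i) := fun y hy => by
    have hupdate : ‖Function.update v i y‖ ≤ 1 := by
      refine (pi_norm_le_iff_of_nonneg zero_le_one).2 fun j => ?_
      rcases eq_or_ne j i with rfl | hj
      · simpa using hy
      · simpa [hj] using (norm_le_pi_norm v j).trans hv
    have hsplit : Function.update v i y = v - Pi.single i (v i) + Pi.single i y := by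
      ext j
      rcases eq_or_ne j i with rfl | hj <;> simp [*]
    have hGsplit : G (Function.update v i y) = G v - g (v i) + g y := by
      rw [hsplit, map_add, map_sub]
      rfl
    linarith [apply_le_one_of_mem_suppFunctionals hG hupdate, hG.2]
  have hvi : ‖v i‖ ≤ 1 := (norm_le_pi_norm v i).trans hv
  refine le_antisymm ((le_abs_self _).trans (g.unit_le_opNorm _ hvi)) ?_
  refine g.opNorm_le_of_unit_norm (by simpa using hmax 0 (by simp)) fun y hy => ?_
  exact abs_le'.2 ⟨hmax y hy.le, by simpa using hmax (-y) (by simp [hy])⟩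

/-- The functional `S ↦ g (S x)` on operators, i.e. the elementary tensor `x ⊗ g`. -/
def evalDual (Y : Type*) [NormedAddCommGroup Y] [NormedSpace ℝ Y] (x : X) :
    (Y →L[ℝ] ℝ) →ₗ[ℝ] ((X →L[ℝ] Y) →L[ℝ] ℝ) where
  toFun g := g.comp (ContinuousLinearMap.apply ℝ Y x)
  map_add' _ _ := rfl
  map_smul' _ _ := rfl

@[simp]
lemma evalDual_apply (x : X) (g : Y →L[ℝ] ℝ) (S : X →L[ℝ] Y) : evalDual Y x g S = g (S x) := rfl

lemma evalDual_mem_suppFunctionals {T : X →L[ℝ] Y} (hT : ‖T‖ ≤ 1) {x : X} (hx : ‖x‖ ≤ 1)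
    {g : Y →L[ℝ] ℝ} (hg : g ∈ suppFunctionals (T x)) : evalDual Y x g ∈ suppFunctionals T := by
  refine mem_suppFunctionals_of_norm_le_one hT ?_ hg.2
  refine ContinuousLinearMap.opNorm_le_bound _ zero_le_one fun S => ?_
  calc ‖g (S x)‖ ≤ ‖g‖ * ‖S x‖ := g.le_opNorm _
    _ ≤ 1 * ‖S‖ := by rw [hg.1]; gcongr; exact S.unit_le_opNorm x hx

theorem suppSpan_operator_eq_iSup {ι : Type*} [Finite ι] {x : ι → X}
    (hx : absConvexHull ℝ (range x) = closedBall 0 1) {T : X →L[ℝ] Y} (hT : ‖T‖ ≤ 1) :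
    suppSpan T = ⨆ i, (suppSpan (T (x i))).map (evalDual Y (x i)) := by
  classical
  cases nonempty_fintype ι
  refine le_antisymm (Submodule.span_le.2 fun F hF => ?_) (iSup_le fun i => ?_)
  · obtain ⟨G, hGF, hGnorm⟩ := exists_comp_linearIsometry_norm_eq (evalIsometry Y hx) F
    have hG : G ∈ suppFunctionals (fun i => T (x i)) :=
      ⟨hGnorm.trans hF.1, (DFunLike.congr_fun hGF T).trans hF.2⟩
    have hnorm : ‖fun i => T (x i)‖ ≤ 1 := ((evalIsometry Y hx).norm_map T).trans_le hT
    have hdecomp : F = ∑ i, evalDual Y (x i) (G.comp (.single ℝ (fun _ => Y) i)) := by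
      ext S
      rw [← hGF]
      simpa [evalIsometry] using congrArg G (Finset.univ_sum_single (evalIsometry Y hx S)).symm
    rw [hdecomp]
    exact Submodule.sum_mem _ fun i _ => Submodule.mem_iSup_of_mem i <| Submodule.mem_map_of_mem <|
      mem_suppSpan_of_apply_eq_norm (comp_single_apply_eq_norm hnorm hG i)
  · have hxi : ‖x i‖ ≤ 1 :=
      mem_closedBall_zero_iff.1 (hx ▸ subset_absConvexHull (mem_range_self i))
    exact (Submodule.map_span_le _ _ _).2 fun g hg =>
      Submodule.subset_span (evalDual_mem_suppFunctionals hT hxi hg)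

lemma sum_evalDual_eq_zero_iff {x : ι → X}
    (hx : ∀ c : ι → ℝ, ∑ i, c i • x i = 0 ↔ ∀ i j, c i = c j) (g : ι → Y →L[ℝ] ℝ) :
    ∑ i, evalDual Y (x i) (g i) = 0 ↔ ∀ i j, g i = g j := by
  constructor
  · intro h
    have hrel : ∀ y, ∑ i, g i y • x i = 0 := fun y => by
      refine SeparatingDual.eq_zero_of_forall_dual_eq_zero (R := ℝ) fun φ => ?_
      simpa [mul_comm] using DFunLike.congr_fun h (φ.smulRight y)
    exact fun i j => ContinuousLinearMap.ext fun y => (hx _).1 (hrel y) i j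
  · intro h
    ext S
    rcases isEmpty_or_nonempty ι with _ | ⟨⟨i₀⟩⟩
    · simp
    have hsum : ∑ i, x i = 0 := by simpa using (hx 1).2 fun _ _ => rfl
    calc (∑ i, evalDual Y (x i) (g i)) S = g i₀ (S (∑ i, x i)) := by simp [h _ i₀]
      _ = 0 := by rw [hsum, map_zero, map_zero]

lemma finrank_iSup_map_add_finrank_iInf {K W M : Type*} [DivisionRing K] [AddCommGroup W]
    [Module K W] [AddCommGroup M] [Module K M] [Nonempty ι] (V : ι → Submodule K W)
    [∀ i, FiniteDimensional K (V i)] (L : ι → W →ₗ[K] M)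
    (hL : ∀ w : ι → W, ∑ i, L i (w i) = 0 ↔ ∀ i j, w i = w j) :
    finrank K ↥(⨆ i, (V i).map (L i)) + finrank K ↥(⨅ i, V i) = ∑ i, finrank K (V i) := by
  classical
  let Φ : (∀ i, V i) →ₗ[K] M := ∑ i, L i ∘ₗ (V i).subtype ∘ₗ LinearMap.proj i
  have hΦ : ∀ w, Φ w = ∑ i, L i (w i) := fun w => by simp [Φ]
  let diag : ↥(⨅ i, V i) →ₗ[K] ∀ i, V i :=
    LinearMap.pi fun i => Submodule.inclusion (iInf_le V i)
  have hsingle : ∀ i, Φ ∘ₗ LinearMap.single K (fun i => V i) i = L i ∘ₗ (V i).subtype := fun i => by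
    ext w
    rw [LinearMap.comp_apply, hΦ, Finset.sum_eq_single_of_mem i (Finset.mem_univ i)]
    · simp
    · intro j _ hji
      simp [hji]
  have hrange : LinearMap.range Φ = ⨆ i, (V i).map (L i) := by
    rw [LinearMap.range_eq_map, ← LinearMap.iSup_range_single, Submodule.map_iSup]
    simp_rw [← LinearMap.range_comp, hsingle, LinearMap.range_comp, Submodule.range_subtype]
  have hker : LinearMap.range diag = LinearMap.ker Φ := by
    ext w
    rw [LinearMap.mem_ker, hΦ, hL]
    constructor
    · rintro ⟨u, rfl⟩ _ _
      rfl
    · intro hw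
      obtain ⟨i₀⟩ := ‹Nonempty ι›
      refine ⟨⟨w i₀, (Submodule.mem_iInf V).2 fun i => hw i i₀ ▸ (w i).2⟩, ?_⟩
      ext i
      exact hw i₀ i
  have hdiag : Function.Injective diag := fun u v huv => by
    obtain ⟨i₀⟩ := ‹Nonempty ι›
    exact Submodule.inclusion_injective (iInf_le V i₀) (congrFun huv i₀)
  rw [← hrange, ← LinearMap.finrank_range_of_inj hdiag, hker,
    LinearMap.finrank_range_add_finrank_ker, Module.finrank_pi_fintype]

theorem finrank_suppSpan_operator_add_finrank_iInf [FiniteDimensional ℝ Y] [Nonempty ι]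
    {x : ι → X} (hball : absConvexHull ℝ (range x) = closedBall 0 1)
    (hrel : ∀ c : ι → ℝ, ∑ i, c i • x i = 0 ↔ ∀ i j, c i = c j)
    {T : X →L[ℝ] Y} (hT : ‖T‖ ≤ 1) :
    finrank ℝ (suppSpan T) + finrank ℝ ↥(⨅ i, suppSpan (T (x i))) =
      ∑ i, finrank ℝ (suppSpan (T (x i))) := by
  rw [suppSpan_operator_eq_iSup hball hT]
  exact finrank_iSup_map_add_finrank_iInf _ _ (sum_evalDual_eq_zero_iff hrel)

end Operators

/-- The space `ℓ₁(ι)` for a finite index type `ι`; for `ι = Fin 3` it is `L13`. -/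
abbrev EllOne (ι : Type*) := PiLp 1 fun _ : ι => ℝ

namespace EllOne

variable {ι : Type*}

/-- The `j`-th coordinate functional on `ℓ₁(ι)`. -/
abbrev coord (j : ι) : EllOne ι →L[ℝ] ℝ := PiLp.proj 1 _ j

lemma linearIndependent_coord : LinearIndependent ℝ (coord : ι → EllOne ι →L[ℝ] ℝ) := by
  classical
  refine LinearIndependent.of_pairwise_dual_eq_zero_one _
    (fun i => LinearMap.applyₗ (PiLp.single 1 i 1) ∘ₗ ContinuousLinearMap.coeLM ℝ)
    (fun i j hij => ?_) fun i => ?_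
  · simp [hij.symm]
  · simp

variable [Fintype ι]

lemma opNorm_sum_smul_coord_le_one {c : ι → ℝ} (hc : ∀ j, |c j| ≤ 1) :
    ‖∑ j, c j • coord j‖ ≤ 1 := by
  refine ContinuousLinearMap.opNorm_le_bound _ zero_le_one fun w => ?_
  calc ‖(∑ j, c j • coord j) w‖ = |∑ j, c j * w j| := by simp
    _ ≤ ∑ j, |c j * w j| := Finset.abs_sum_le_sum_abs _ _
    _ ≤ ∑ j, |w j| := Finset.sum_le_sum fun j _ => by
        rw [abs_mul]; exact mul_le_of_le_one_left (abs_nonneg _) (hc j)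
    _ = 1 * ‖w‖ := by simp [PiLp.norm_eq_of_L1]

/-- The coordinatewise sign of `v`, as a functional on `ℓ₁(ι)`: the canonical supporting functional
of a unit vector `v`. -/
def signFunctional (v : EllOne ι) : EllOne ι →L[ℝ] ℝ :=
  ∑ j, (SignType.sign (v j) : ℝ) • coord j

variable {v : EllOne ι}

lemma signFunctional_mem_suppFunctionals (hv : ‖v‖ = 1) :
    signFunctional v ∈ suppFunctionals v := by
  refine mem_suppFunctionals_of_norm_le_one hv.le (opNorm_sum_smul_coord_le_one fun j => ?_) ?_
  · rcases lt_trichotomy (v j) 0 with h | h | h <;> simp [h]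
  · rw [← hv, PiLp.norm_eq_of_L1]
    simp [signFunctional, sign_mul_self]

lemma signFunctional_add_coord_mem_suppFunctionals (hv : ‖v‖ = 1) {j : ι} (hj : v j = 0) :
    signFunctional v + coord j ∈ suppFunctionals v := by
  classical
  refine mem_suppFunctionals_of_norm_le_one hv.le ?_ ?_
  · have hsum : signFunctional v + coord j =
        ∑ i, ((SignType.sign (v i) : ℝ) + if i = j then 1 else 0) • coord i := by
      simp [signFunctional, add_smul, Finset.sum_add_distrib]
    rw [hsum]
    refine opNorm_sum_smul_coord_le_one fun i => ?_
    rcases eq_or_ne i j with rfl | hij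
    · simp [hj]
    · rcases lt_trichotomy (v i) 0 with h | h | h <;> simp [h, hij]
  · simp [(signFunctional_mem_suppFunctionals hv).2, hj]

lemma apply_single_of_mem_suppFunctionals [DecidableEq ι] (hv : ‖v‖ = 1) {g : EllOne ι →L[ℝ] ℝ}
    (hg : g ∈ suppFunctionals v) {j : ι} (hj : v j ≠ 0) :
    g (PiLp.single 1 j 1) = SignType.sign (v j) := by
  have hle : ∀ i ∈ Finset.univ, v i * g (PiLp.single 1 i 1) ≤ |v i| := fun i _ => by
    have hgi : |g (PiLp.single 1 i 1)| ≤ 1 := (g.unit_le_opNorm _ (by simp)).trans_eq hg.1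
    calc v i * g (PiLp.single 1 i 1) ≤ |v i| * |g (PiLp.single 1 i 1)| :=
          (le_abs_self _).trans_eq (abs_mul _ _)
      _ ≤ |v i| := mul_le_of_le_one_right (abs_nonneg _) hgi
  have hsum : ∑ i, v i * g (PiLp.single 1 i 1) = ∑ i, |v i| := by
    calc ∑ i, v i * g (PiLp.single 1 i 1) = g (∑ i, v i • PiLp.basisFun 1 ℝ ι i) := by simp
      _ = g v := congrArg g ((PiLp.basisFun 1 ℝ ι).sum_repr v)
      _ = ∑ i, |v i| := by rw [hg.2, ← hv, PiLp.norm_eq_of_L1]; rfl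
  have hterm := (Finset.sum_eq_sum_iff_of_le hle).1 hsum j (Finset.mem_univ j)
  rw [← self_mul_sign] at hterm
  exact mul_left_cancel₀ hj hterm

theorem suppSpan_eq_span (hv : ‖v‖ = 1) :
    suppSpan v =
      Submodule.span ℝ (insert (signFunctional v) (range fun j : {j // v j = 0} => coord j.1)) := by
  classical
  refine le_antisymm (Submodule.span_le.2 fun g hg => ?_) (Submodule.span_le.2 ?_)
  · have hdecomp : g = signFunctional v +
        ∑ j, (g (PiLp.single 1 j 1) - SignType.sign (v j)) • coord j :=
      ContinuousLinearMap.coe_injective <| (PiLp.basisFun 1 ℝ ι).ext fun i => by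
        simp [signFunctional]
    rw [hdecomp]
    refine add_mem (Submodule.subset_span (mem_insert _ _)) (Submodule.sum_mem _ fun j _ => ?_)
    by_cases hj : v j = 0
    · exact Submodule.smul_mem _ _ (Submodule.subset_span (mem_insert_of_mem _ ⟨⟨j, hj⟩, rfl⟩))
    · rw [apply_single_of_mem_suppFunctionals hv hg hj, sub_self, zero_smul]
      exact zero_mem _
  · have hsign := Submodule.subset_span (R := ℝ) (signFunctional_mem_suppFunctionals hv)
    rintro _ (rfl | ⟨j, rfl⟩)
    · exact hsign
    · exact (Submodule.add_mem_iff_right _ hsign).1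
        (Submodule.subset_span (signFunctional_add_coord_mem_suppFunctionals hv j.2))

theorem finrank_suppSpan (hv : ‖v‖ = 1) :
    finrank ℝ (suppSpan v) = Fintype.card {j // v j = 0} + 1 := by
  have hker : Submodule.span ℝ (range fun j : {j // v j = 0} => coord j.1) ≤
      LinearMap.ker (ContinuousLinearMap.apply ℝ ℝ v).toLinearMap :=
    Submodule.span_le.2 (range_subset_iff.2 fun j => j.2)
  have hsign := (signFunctional_mem_suppFunctionals hv).2
  have hindep := (linearIndependent_coord.comp _ Subtype.val_injective).option
    fun h => one_ne_zero (hsign.symm.trans (hker h))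
  rw [suppSpan_eq_span hv, ← Fintype.card_option, ← finrank_span_eq_card hindep, Option.range_eq]
  rfl

lemma ne_zero_of_finrank_suppSpan (hv : ‖v‖ = 1) (h : finrank ℝ (suppSpan v) = 1) (j : ι) :
    v j ≠ 0 := by
  rw [finrank_suppSpan hv, Nat.add_eq_right, Fintype.card_eq_zero_iff] at h
  exact fun hj => h.false ⟨j, hj⟩

lemma exists_eq_zero_of_finrank_suppSpan (hv : ‖v‖ = 1) (h : 2 ≤ finrank ℝ (suppSpan v)) :
    ∃ j, v j = 0 := by
  rw [finrank_suppSpan hv, Nat.succ_le_succ_iff, Nat.one_le_iff_ne_zero,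
    ← Nat.pos_iff_ne_zero, Fintype.card_pos_iff] at h
  exact nonempty_subtype.1 h

lemma exists_forall_ne_eq_zero_of_finrank_suppSpan (hv : ‖v‖ = 1)
    (h : finrank ℝ (suppSpan v) = Fintype.card ι) : ∃ p, ∀ j ≠ p, v j = 0 := by
  classical
  have hcard : Fintype.card {j // ¬ v j = 0} = 1 := by
    rw [Fintype.card_subtype_compl, ← h, finrank_suppSpan hv, Nat.add_sub_cancel_left]
  obtain ⟨p, hp⟩ := Fintype.card_eq_one_iff.1 hcard
  exact ⟨p, fun j hj => by_contra fun hvj => hj (congrArg Subtype.val (hp ⟨j, hvj⟩))⟩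

lemma normParallel_of_mul_nonneg {a b : EllOne ι} (h : ∀ j, 0 ≤ a j * b j) : NormParallel a b := by
  left
  simp only [PiLp.norm_eq_of_L1, ← Finset.sum_add_distrib]
  exact Finset.sum_congr rfl fun j _ => abs_add_eq_add_abs_iff _ _ |>.2 (mul_nonneg_iff.1 (h j))

lemma normParallel_of_mul_nonpos {a b : EllOne ι} (h : ∀ j, a j * b j ≤ 0) : NormParallel a b := by
  rcases normParallel_of_mul_nonneg (a := a) (b := -b) fun j => by simpa using h j with hab | hab
  · exact .inr (by rwa [← sub_eq_add_neg, norm_neg] at hab)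
  · exact .inl (by rwa [sub_neg_eq_add, norm_neg] at hab)

lemma normParallel_of_forall_ne_eq_zero {a d : EllOne ι} {p : ι} (hd : ∀ j ≠ p, d j = 0) :
    NormParallel a d := by
  have hzero : ∀ j ≠ p, a j * d j = 0 := fun j hj => by rw [hd j hj, mul_zero]
  rcases le_total 0 (a p * d p) with h | h
  · refine normParallel_of_mul_nonneg fun j => ?_
    rcases eq_or_ne j p with rfl | hj
    exacts [h, (hzero j hj).ge]
  · refine normParallel_of_mul_nonpos fun j => ?_
    rcases eq_or_ne j p with rfl | hj
    exacts [h, (hzero j hj).le]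

end EllOne

section RealLemmas

variable {a b c β γ : ℝ}

lemma mul_nonneg_of_abs_le_abs_add (ha : |a| ≤ |a + c|) (hc : |c| ≤ |a + c|) : 0 ≤ a * c := by
  rw [← sq_le_sq] at ha hc
  by_contra! hac
  nlinarith [sq_nonneg (a + c)]

lemma mul_nonpos_of_abs_add_add_eq (hβ : 0 < β) (hγ : 0 < γ) (hb : |b| = |a| + β)
    (hc : |c| = |a| + γ) (habc : |a + b + c| = |a| + β + γ) : a * b ≤ 0 := by
  by_contra! hab
  rcases pos_and_pos_or_neg_and_neg_of_mul_pos hab with ⟨ha, hb0⟩ | ⟨ha, hb0⟩ <;>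
  rcases abs_cases c with ⟨hc', _⟩ | ⟨hc', _⟩ <;>
  rcases abs_cases (a + b + c) with ⟨habc', _⟩ | ⟨habc', _⟩ <;>
  simp only [abs_of_pos, abs_of_neg, ha, hb0, hc', habc'] at hb hc habc <;> linarith

end RealLemmas

section ThreeCoordinates

lemma univ_fin_three_eq_of_ne {k l m : Fin 3} (hkl : k ≠ l) (hkm : k ≠ m) (hlm : l ≠ m) :
    (Finset.univ : Finset (Fin 3)) = {k, l, m} := by
  decide +revert

lemma forall_fin_three_of_ne {k l m : Fin 3} (hkl : k ≠ l) (hkm : k ≠ m) (hlm : l ≠ m)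
    {P : Fin 3 → Prop} (hk : P k) (hl : P l) (hm : P m) (j : Fin 3) : P j := by
  have hj : j ∈ ({k, l, m} : Finset (Fin 3)) :=
    univ_fin_three_eq_of_ne hkl hkm hlm ▸ Finset.mem_univ j
  simp only [Finset.mem_insert, Finset.mem_singleton] at hj
  rcases hj with rfl | rfl | rfl <;> assumption

lemma norm_l13_of_ne {k l m : Fin 3} (hkl : k ≠ l) (hkm : k ≠ m) (hlm : l ≠ m) (v : L13) :
    ‖v‖ = |v k| + |v l| + |v m| := by
  rw [PiLp.norm_eq_of_L1, univ_fin_three_eq_of_ne hkl hkm hlm,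
    Finset.sum_insert (by simp [hkl, hkm]), Finset.sum_pair hlm, ← add_assoc]
  rfl

lemma exists_ne_and_ne (k l : Fin 3) : ∃ m, k ≠ m ∧ l ≠ m := by
  decide +revert

variable {a b c d : L13} {k l p : Fin 3}

-- Here `-(a + b + c)` is a vertex `±e_k` of the unit ball of `ℓ₁³`, and `k` is the zero of `b`.
lemma normParallel_of_vertex_at_zero {m : Fin 3} (hkl : k ≠ l) (hkm : k ≠ m) (hlm : l ≠ m)
    (ha : ‖a‖ = 1) (hb : ‖b‖ = 1) (hc : ‖c‖ = 1) (hbk : b k = 0) (hcl : c l = 0)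
    (hk : |a k + b k + c k| = 1) (hl : a l + b l + c l = 0) (hm : a m + b m + c m = 0) :
    NormParallel a b ∧ NormParallel a c := by
  rw [norm_l13_of_ne hkl hkm hlm] at ha hb hc
  have hbl : b l = -a l := by linarith
  have hbm : b m = -(a m + c m) := by linarith
  simp only [hbk, hcl, hbl, hbm, abs_neg, abs_zero, zero_add, add_zero] at hb hc hk
  have hack : 0 ≤ a k * c k := mul_nonneg_of_abs_le_abs_add
    (by linarith [abs_nonneg (a l), abs_nonneg (a m)]) (by linarith [abs_nonneg (c m)])
  have habsk : |a k| + |c k| = 1 :=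
    ((abs_add_eq_add_abs_iff _ _).2 (mul_nonneg_iff.1 hack)).symm.trans hk
  have hacm : 0 ≤ a m * c m :=
    mul_nonneg_iff.2 ((abs_add_eq_add_abs_iff _ _).1 (by linarith))
  refine ⟨EllOne.normParallel_of_mul_nonpos (forall_fin_three_of_ne hkl hkm hlm ?_ ?_ ?_),
    EllOne.normParallel_of_mul_nonneg (forall_fin_three_of_ne hkl hkm hlm ?_ ?_ ?_)⟩
  · simp [hbk]
  · rw [hbl]; nlinarith [sq_nonneg (a l)]
  · rw [hbm]; nlinarith [sq_nonneg (a m)]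
  · exact hack
  · simp [hcl]
  · exact hacm

-- Here `-(a + b + c)` is a vertex `±e_m` of the unit ball of `ℓ₁³`, and `m` is neither zero.
lemma normParallel_of_vertex_off_zeros {m : Fin 3} (hkl : k ≠ l) (hkm : k ≠ m) (hlm : l ≠ m)
    (ha : ‖a‖ = 1) (hb : ‖b‖ = 1) (hc : ‖c‖ = 1) (hak : a k ≠ 0) (hal : a l ≠ 0)
    (hbk : b k = 0) (hcl : c l = 0)
    (hk : a k + b k + c k = 0) (hl : a l + b l + c l = 0) (hm : |a m + b m + c m| = 1) :
    NormParallel a b ∧ NormParallel a c := by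
  rw [norm_l13_of_ne hkl hkm hlm] at ha hb hc
  have hbl : b l = -a l := by linarith
  have hck : c k = -a k := by linarith
  simp only [hbk, hcl, hbl, hck, abs_neg, abs_zero, zero_add, add_zero] at hb hc
  have habm : a m * b m ≤ 0 := mul_nonpos_of_abs_add_add_eq (c := c m) (abs_pos.2 hak)
    (abs_pos.2 hal) (by linarith) (by linarith) (by linarith)
  have hacm : a m * c m ≤ 0 := mul_nonpos_of_abs_add_add_eq (c := b m) (abs_pos.2 hal)
    (abs_pos.2 hak) (by linarith) (by linarith) (by rw [add_right_comm]; linarith)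
  refine ⟨EllOne.normParallel_of_mul_nonpos (forall_fin_three_of_ne hkl hkm hlm ?_ ?_ habm),
    EllOne.normParallel_of_mul_nonpos (forall_fin_three_of_ne hkl hkm hlm ?_ ?_ hacm)⟩
  · simp [hbk]
  · rw [hbl]; nlinarith [sq_nonneg (a l)]
  · rw [hck]; nlinarith [sq_nonneg (a k)]
  · simp [hcl]

lemma zeros_ne_of_norm_eq_one (ha : ‖a‖ = 1) (ha0 : ∀ j, a j ≠ 0) (hbk : b k = 0) (hcl : c l = 0)
    (hzero : ∀ j ≠ p, a j + b j + c j = 0) (hp : |a p + b p + c p| = 1) : k ≠ l := by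
  rintro rfl
  obtain rfl : k = p := by
    by_contra hkp
    exact ha0 k (by simpa [hbk, hcl] using hzero k hkp)
  obtain ⟨m, hmk⟩ := exists_ne k
  have hle : |a k| + |a m| ≤ ‖a‖ := by
    rw [PiLp.norm_eq_of_L1]
    exact Finset.add_le_sum (f := fun j => ‖a j‖) (fun _ _ => norm_nonneg _) (Finset.mem_univ k)
      (Finset.mem_univ m) hmk.symm
  simp only [hbk, hcl, add_zero] at hp
  linarith [abs_pos.2 (ha0 m)]

theorem normParallel_of_sum_eq_zero (ha : ‖a‖ = 1) (hb : ‖b‖ = 1) (hc : ‖c‖ = 1) (hd : ‖d‖ = 1)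
    (hsum : a + b + c + d = 0) (ha0 : ∀ j, a j ≠ 0) (hbk : b k = 0) (hcl : c l = 0)
    (hd0 : ∀ j ≠ p, d j = 0) : NormParallel a b ∧ NormParallel a c := by
  have hcoord : ∀ j, a j + b j + c j = -d j := fun j =>
    eq_neg_of_add_eq_zero_left (congrArg (· j) hsum)
  have hzero : ∀ j ≠ p, a j + b j + c j = 0 := fun j hj => by rw [hcoord, hd0 j hj, neg_zero]
  have hp : |a p + b p + c p| = 1 := by
    rw [hcoord, abs_neg, ← hd, PiLp.norm_eq_of_L1, Finset.sum_eq_single_of_mem p (Finset.mem_univ p)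
      fun j _ hj => norm_eq_zero.2 (hd0 j hj), Real.norm_eq_abs]
  have hkl : k ≠ l := zeros_ne_of_norm_eq_one ha ha0 hbk hcl hzero hp
  rcases eq_or_ne p k with rfl | hpk
  · obtain ⟨m, hpm, hlm⟩ := exists_ne_and_ne p l
    exact normParallel_of_vertex_at_zero hkl hpm hlm ha hb hc hbk hcl hp (hzero l hkl.symm)
      (hzero m hpm.symm)
  rcases eq_or_ne p l with rfl | hpl
  · obtain ⟨m, hpm, hkm⟩ := exists_ne_and_ne p k
    simp only [add_right_comm (a _) (b _)] at hp hzero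
    exact (normParallel_of_vertex_at_zero hkl.symm hpm hkm ha hc hb hcl hbk hp (hzero k hkl)
      (hzero m hpm.symm)).symm
  · exact normParallel_of_vertex_off_zeros hkl hpk.symm hpl.symm ha hb hc (ha0 k) (ha0 l) hbk hcl
      (hzero k hpk.symm) (hzero l hpl.symm) hp

theorem iInf_suppSpan_of_sum_eq_zero {u : Fin 4 → L13} (hu : ∀ i, ‖u i‖ = 1) (hsum : ∑ i, u i = 0)
    (hrank : ∀ i, finrank ℝ (suppSpan (u i)) = ![1, 2, 2, 3] i) :
    ⨅ i, suppSpan (u i) = suppSpan (u 0) := by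
  have hu0 := EllOne.ne_zero_of_finrank_suppSpan (hu 0) (hrank 0)
  obtain ⟨k, hk⟩ := EllOne.exists_eq_zero_of_finrank_suppSpan (hu 1) (hrank 1).ge
  obtain ⟨l, hl⟩ := EllOne.exists_eq_zero_of_finrank_suppSpan (hu 2) (hrank 2).ge
  obtain ⟨p, hp⟩ := EllOne.exists_forall_ne_eq_zero_of_finrank_suppSpan (hu 3) (hrank 3)
  rw [Fin.sum_univ_four] at hsum
  obtain ⟨h1, h2⟩ :=
    normParallel_of_sum_eq_zero (hu 0) (hu 1) (hu 2) (hu 3) hsum hu0 hk hl hp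
  have h3 : NormParallel (u 0) (u 3) := EllOne.normParallel_of_forall_ne_eq_zero hp
  refine le_antisymm (iInf_le _ 0) (le_iInf fun i => ?_)
  fin_cases i
  · exact le_rfl
  · exact h1.suppSpan_le (hu 0) (hu 1) (hrank 0)
  · exact h2.suppSpan_le (hu 0) (hu 2) (hrank 0)
  · exact h3.suppSpan_le (hu 0) (hu 3) (hrank 0)

end ThreeCoordinates

section Cube

lemma convexHull_pi_neg_one_one (ι : Type*) [Fintype ι] :
    convexHull ℝ (univ.pi fun _ : ι => ({-1, 1} : Set ℝ)) = closedBall 0 1 := by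
  rw [convexHull_pi, closedBall_pi _ zero_le_one]
  refine pi_congr rfl fun i _ => ?_
  rw [convexHull_pair, segment_eq_Icc (by norm_num), Pi.zero_apply, Real.closedBall_eq_Icc]
  norm_num

/-- Four vertices of the cube `closedBall 0 1` forming a regular tetrahedron: those whose
coordinates have product `1`, so that the other vertices of the cube are their antipodes. -/
def inscribedTetrahedron : Fin 4 → Linf3 := ![x₁, -x₂, x₃, -x₄]

lemma inscribedTetrahedron_eq :
    inscribedTetrahedron = ![![1, 1, 1], ![1, -1, -1], ![-1, -1, 1], ![-1, 1, -1]] := by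
  simp [inscribedTetrahedron, x₁, x₂, x₃, x₄]

lemma inscribedTetrahedron_injective : Function.Injective inscribedTetrahedron := by
  rw [inscribedTetrahedron_eq]
  intro i j hij
  fin_cases i <;> fin_cases j <;> first | rfl | norm_num [funext_iff, Fin.forall_fin_succ] at hij

lemma prod_inscribedTetrahedron (i : Fin 4) : ∏ j, inscribedTetrahedron i j = 1 := by
  rw [inscribedTetrahedron_eq]
  fin_cases i <;> simp [Fin.prod_univ_three]

lemma inscribedTetrahedron_ne_neg (i j : Fin 4) :
    inscribedTetrahedron i ≠ -inscribedTetrahedron j := by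
  intro h
  have hprod : (1 : ℝ) = (-1) ^ 3 := by
    simpa [Finset.prod_neg, prod_inscribedTetrahedron] using congrArg (fun v => ∏ k, v k) h
  norm_num at hprod

lemma range_union_neg_range_inscribedTetrahedron :
    range inscribedTetrahedron ∪ -range inscribedTetrahedron =
      {x₁, -x₁, x₂, -x₂, x₃, -x₃, x₄, -x₄} := by
  ext v
  simp only [inscribedTetrahedron, Matrix.range_cons, Matrix.range_empty, union_neg, neg_singleton,
    mem_union, mem_singleton_iff, neg_empty, neg_neg, mem_empty_iff_false, mem_insert_iff]
  tauto

lemma pi_neg_one_one_eq_range_union_neg_range :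
    univ.pi (fun _ : Fin 3 => ({-1, 1} : Set ℝ)) =
      range inscribedTetrahedron ∪ -range inscribedTetrahedron := by
  rw [inscribedTetrahedron_eq]
  refine Subset.antisymm (fun v hv => ?_) (union_subset ?_ ?_)
  · have heta : v = ![v 0, v 1, v 2] := (FinVec.etaExpand_eq v).symm
    rw [heta]
    rcases hv 0 trivial with h0 | h0 <;> rcases hv 1 trivial with h1 | h1 <;>
      rcases hv 2 trivial with h2 | h2 <;> rw [h0, h1, h2] <;> simp
  · rintro _ ⟨i, rfl⟩ j -
    fin_cases i <;> fin_cases j <;> simp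
  · rintro v ⟨i, hi⟩ j -
    rw [← neg_neg v, ← hi]
    fin_cases i <;> fin_cases j <;> simp

lemma absConvexHull_range_inscribedTetrahedron :
    absConvexHull ℝ (range inscribedTetrahedron) = closedBall 0 1 := by
  rw [← convexHull_union_neg_eq_absConvexHull, ← pi_neg_one_one_eq_range_union_neg_range,
    convexHull_pi_neg_one_one]

lemma sum_inscribedTetrahedron : ∑ i, inscribedTetrahedron i = 0 := by
  rw [inscribedTetrahedron_eq]
  ext j
  fin_cases j <;> simp [Fin.sum_univ_four]

lemma sum_smul_inscribedTetrahedron_eq_zero_iff (c : Fin 4 → ℝ) :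
    ∑ i, c i • inscribedTetrahedron i = 0 ↔ ∀ i j, c i = c j := by
  constructor
  · rw [inscribedTetrahedron_eq]
    intro h
    have h0 : c 0 + c 1 - c 2 - c 3 = 0 := by
      simpa [Fin.sum_univ_four, sub_eq_add_neg] using congrFun h 0
    have h1 : c 0 - c 1 - c 2 + c 3 = 0 := by
      simpa [Fin.sum_univ_four, sub_eq_add_neg] using congrFun h 1
    have h2 : c 0 - c 1 + c 2 - c 3 = 0 := by
      simpa [Fin.sum_univ_four, sub_eq_add_neg] using congrFun h 2
    have hconst : ∀ i, c i = c 0 := fun i => by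
      fin_cases i
      exacts [rfl, show c 1 = c 0 by linarith, show c 2 = c 0 by linarith,
        show c 3 = c 0 by linarith]
    exact fun i j => (hconst i).trans (hconst j).symm
  · intro h
    simp only [h _ 0, ← Finset.smul_sum, sum_inscribedTetrahedron, smul_zero]

end Cube

lemma encard_eq_two_mul_encard_preimage {ι E : Type*} [InvolutiveNeg E] {x : ι → E}
    (hinj : Function.Injective x) (hneg : ∀ i j, x i ≠ -x j) {S : Set E} (hS : -S = S)
    (hrange : S ⊆ range x ∪ -range x) : S.encard = 2 * (x ⁻¹' S).encard := by
  have hdisj : Disjoint (S ∩ range x) (-(S ∩ range x)) := by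
    rw [Set.disjoint_left]
    rintro _ ⟨-, i, rfl⟩ ⟨-, j, hj⟩
    exact hneg j i hj
  calc S.encard = (S ∩ (range x ∪ -range x)).encard := by rw [inter_eq_left.2 hrange]
    _ = ((S ∩ range x) ∪ -(S ∩ range x)).encard := by rw [inter_neg, hS, inter_union_distrib_left]
    _ = 2 * (x ⁻¹' S).encard := by
      rw [encard_union_eq hdisj, encard_neg, ← image_preimage_eq_inter_range, hinj.encard_image,
        two_mul]

lemma encard_Sk {T : Linf3 →L[ℝ] L13}
    (hMT : MTExt T = range inscribedTetrahedron ∪ -range inscribedTetrahedron) (k : ℕ) :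
    (Sk T k).encard =
      2 * Fintype.card {i // finrank ℝ (suppSpan (T (inscribedTetrahedron i))) = k} := by
  have hneg : -Sk T k = Sk T k := by
    ext v
    have hrank : finrank ℝ (Submodule.span ℝ (suppFunctionals (T (-v)))) =
        finrank ℝ (Submodule.span ℝ (suppFunctionals (T v))) := by
      rw [map_neg, suppFunctionals_neg, Submodule.span_neg]
    simp [Sk, hMT, hrank, or_comm]
  have hpreimage : inscribedTetrahedron ⁻¹' Sk T k =
      {i | finrank ℝ (suppSpan (T (inscribedTetrahedron i))) = k} := by
    ext i
    simp [Sk, hMT]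
  rw [encard_eq_two_mul_encard_preimage inscribedTetrahedron_injective inscribedTetrahedron_ne_neg
    hneg (hMT ▸ sep_subset _ _), hpreimage, encard, ENat.card_eq_coe_fintype_card]
  rfl

lemma exists_perm_comp_eq_of_card_fiber_le {ι κ : Type*} [Fintype ι] [DecidableEq κ] {f g : ι → κ}
    (h : ∀ j, Fintype.card {i // g i = g j} ≤ Fintype.card {i // f i = g j}) :
    ∃ σ : Equiv.Perm ι, f ∘ σ = g := by
  have hfiber : ∀ k, Nonempty ({i // g i = k} ↪ {i // f i = k}) := fun k => by
    by_cases hk : ∃ j, g j = k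
    · obtain ⟨j, rfl⟩ := hk
      exact Function.Embedding.nonempty_of_card_le (h j)
    · have : IsEmpty {i // g i = k} := isEmpty_subtype _ |>.2 (not_exists.1 hk)
      exact ⟨.ofIsEmpty⟩
  let e k := (hfiber k).some
  let σ : ι ↪ ι := (Equiv.sigmaFiberEquiv g).symm.toEmbedding.trans
    ((Function.Embedding.sigmaMap (.refl κ) e).trans (Equiv.sigmaFiberEquiv f).toEmbedding)
  exact ⟨σ.equivOfFiniteSelfEmbedding, funext fun i => (e (g i) ⟨i, rfl⟩).2⟩

lemma exists_perm_finrank_suppSpan_eq {T : Linf3 →L[ℝ] L13}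
    (hMT : MTExt T = range inscribedTetrahedron ∪ -range inscribedTetrahedron)
    (h1 : (Sk T 1).encard = 2) (h2 : (Sk T 2).encard = 4) (h3 : (Sk T 3).encard = 2) :
    ∃ σ : Equiv.Perm (Fin 4), ∀ i,
      finrank ℝ (suppSpan (T (inscribedTetrahedron (σ i)))) = ![1, 2, 2, 3] i := by
  have hcard : ∀ k n : ℕ, (Sk T k).encard = 2 * n →
      Fintype.card {i // finrank ℝ (suppSpan (T (inscribedTetrahedron i))) = k} = n := by
    intro k n h
    rw [encard_Sk hMT] at h
    norm_cast at h
    omega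
  have hfiber : ∀ j : Fin 4, Fintype.card {i : Fin 4 // ![1, 2, 2, 3] i = ![1, 2, 2, 3] j} ≤
      Fintype.card {i // finrank ℝ (suppSpan (T (inscribedTetrahedron i))) = ![1, 2, 2, 3] j} := by
    intro j
    fin_cases j
    exacts [(hcard 1 1 h1).ge, (hcard 2 2 h2).ge, (hcard 2 2 h2).ge, (hcard 3 1 h3).ge]
  obtain ⟨σ, hσ⟩ := exists_perm_comp_eq_of_card_fiber_le hfiber
  exact ⟨σ, congrFun hσ⟩

theorem stmt_18
    (T : Linf3 →L[ℝ] L13) (hT : ‖T‖ = 1)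
    (hMT : MTExt T = {x₁, -x₁, x₂, -x₂, x₃, -x₃, x₄, -x₄})
    (h1 : (Sk T 1).encard = 2) (h2 : (Sk T 2).encard = 4)
    (h3 : (Sk T 3).encard = 2)
    :
    finrank ℝ (Submodule.span ℝ (suppFunctionals T)) = 7 := by
  rw [← range_union_neg_range_inscribedTetrahedron] at hMT
  have hnorm : ∀ i, ‖T (inscribedTetrahedron i)‖ = 1 := fun i =>
    (show inscribedTetrahedron i ∈ MTExt T from hMT ▸ .inl (mem_range_self i)).1.2.trans hT
  obtain ⟨σ, hrank⟩ := exists_perm_finrank_suppSpan_eq hMT h1 h2 h3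
  have hsum : ∑ i, T (inscribedTetrahedron (σ i)) = 0 := by
    rw [← map_sum, Equiv.sum_comp σ, sum_inscribedTetrahedron, map_zero]
  have hinter : ⨅ i, suppSpan (T (inscribedTetrahedron i)) =
      suppSpan (T (inscribedTetrahedron (σ 0))) := by
    rw [← iInf_suppSpan_of_sum_eq_zero (fun i => hnorm (σ i)) hsum hrank]
    exact (σ.iInf_comp (g := fun i => suppSpan (T (inscribedTetrahedron i)))).symm
  have htotal : ∑ i, finrank ℝ (suppSpan (T (inscribedTetrahedron i))) = 8 := by
    rw [← Equiv.sum_comp σ]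
    simp [hrank, Fin.sum_univ_four]
  have hdim := finrank_suppSpan_operator_add_finrank_iInf absConvexHull_range_inscribedTetrahedron
    sum_smul_inscribedTetrahedron_eq_zero_iff hT.le
  rw [hinter, hrank, htotal] at hdim
  exact Nat.add_right_cancel hdim
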